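/- For all SCL terms s and t over A: EqCL ⊢ s = t if and only if CP_cl ⊢ f(s) = f(t). (That is, the equational theory EqCL of two-valued conditional logic completely axiomatises the conditional short-circuit logic CℓSCL determined by CP_cl via the translation f.) -/

import Mathlib

/-- Conditional expressions over a set `A` of atoms. -/
inductive Expr (A : Type) : Type
  | T : Expr A
  | F : Expr A
  | atom : A → Expr A
  | cond : Expr A → Expr A → Expr A → Expr A

/-- Derivability from the axiom system CP_cl = CP + (CPmem) + (CL2). -/
inductive DerCl {A : Type} : Expr A → Expr A → Prop
  | refl (P : Expr A) : DerCl P P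
  | symm {P Q : Expr A} : DerCl P Q → DerCl Q P
  | trans {P Q R : Expr A} : DerCl P Q → DerCl Q R → DerCl P R
  | congr {P P' Q Q' R R' : Expr A} :
      DerCl P P' → DerCl Q Q' → DerCl R R' →
      DerCl (.cond P Q R) (.cond P' Q' R')
  | cp1 (x y : Expr A) : DerCl (.cond x .T y) x
  | cp2 (x y : Expr A) : DerCl (.cond x .F y) y
  | cp3 (x : Expr A) : DerCl (.cond .T x .F) x
  | cp4 (x y z u v : Expr A) :
      DerCl (.cond x (.cond y z u) v) (.cond (.cond x y v) z (.cond x u v))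
  | cpmem (x y z u v w : Expr A) :
      DerCl (.cond x y (.cond z u (.cond v y w))) (.cond x y (.cond z u w))
  | cl2 (x y z u v w : Expr A) :
      DerCl (.cond (.cond x y z) u (.cond v y w)) (.cond (.cond x u v) y (.cond z u w))

/-- SCL terms over A: T, F, atoms, negation ¬, short-circuit conjunction ⩓ (and)
and short-circuit disjunction ⩔ (or). -/
inductive STerm (A : Type) : Type
  | T : STerm A
  | F : STerm A
  | atom : A → STerm A
  | neg : STerm A → STerm A
  | and : STerm A → STerm A → STerm A
  | or : STerm A → STerm A → STerm A

/-- Derivability from EqCL = EqMSCL + (Com):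
(Neg) F = ¬T, (Or) x ⩔ y = ¬(¬x ⩓ ¬y), (Tand) T ⩓ x = x, (Abs) x ⩓ (x ⩔ y) = x,
(Mem) (x ⩔ y) ⩓ z = (¬x ⩓ (y ⩓ z)) ⩔ (x ⩓ z),
(Com) (x ⩓ y) ⩔ (y ⩓ x) = (y ⩓ x) ⩔ (x ⩓ y). -/
inductive DerEqCL {A : Type} : STerm A → STerm A → Prop
  | refl (s : STerm A) : DerEqCL s s
  | symm {s t : STerm A} : DerEqCL s t → DerEqCL t s
  | trans {s t u : STerm A} : DerEqCL s t → DerEqCL t u → DerEqCL s u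
  | negCongr {s t : STerm A} : DerEqCL s t → DerEqCL (.neg s) (.neg t)
  | andCongr {s s' t t' : STerm A} :
      DerEqCL s s' → DerEqCL t t' → DerEqCL (.and s t) (.and s' t')
  | orCongr {s s' t t' : STerm A} :
      DerEqCL s s' → DerEqCL t t' → DerEqCL (.or s t) (.or s' t')
  | negAx : DerEqCL (A := A) .F (.neg .T)
  | orAx (x y : STerm A) : DerEqCL (.or x y) (.neg (.and (.neg x) (.neg y)))
  | tand (x : STerm A) : DerEqCL (.and .T x) x
  | abs (x y : STerm A) : DerEqCL (.and x (.or x y)) x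
  | mem (x y z : STerm A) :
      DerEqCL (.and (.or x y) z) (.or (.and (.neg x) (.and y z)) (.and x z))
  | com (x y : STerm A) :
      DerEqCL (.or (.and x y) (.and y x)) (.or (.and y x) (.and x y))

/-- The translation f from SCL terms to conditional expressions:
f(¬t) = F ◁ f(t) ▷ T, f(t₁ ⩓ t₂) = f(t₂) ◁ f(t₁) ▷ F, f(t₁ ⩔ t₂) = T ◁ f(t₁) ▷ f(t₂). -/
def sclToCond {A : Type} : STerm A → Expr A
  | .T => .T
  | .F => .F
  | .atom a => .atom a
  | .neg t => .cond .F (sclToCond t) .T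
  | .and s t => .cond (sclToCond t) (sclToCond s) .F
  | .or s t => .cond .T (sclToCond s) (sclToCond t)

/-!
Both calculi are equational, so it suffices to compare their classes of algebras. Every model of
CP_cl becomes a model of EqCL under `∼x = F ◁ x ▷ T`, `x ⩓ y = y ◁ x ▷ F`, `x ⩔ y = T ◁ x ▷ y`
(the instance in `CPAlg`), which gives the forward direction in the free model `FreeCP`.
Conversely, in every model of EqCL the operation `x ◁ y ▷ z := (y ⩓ x) ⩔ (∼y ⩓ z)` satisfies CP_cl
(`DerCl.sound`) and gives the short-circuit operations back (`eval_sclToCond`); evaluating in the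
free model `FreeCL` gives the backward direction.

The work lies in the second construction. The axioms yield `∼∼x = x`, hence a duality principle
(`CLAlg.dual`), and then the memorizing laws, such as `x ⩓ (y ⩓ x) = x ⩓ y`, associativity and left
distributivity. They show that an element `w` with `(y ⩔ T) ⩓ w = w` is determined by `y ⩓ w` and
`∼y ⩓ w` (`CLAlg.eq_cond`), so each axiom on conditionals can be checked branch by branch. Only
(CL2) needs (Com), through the commutation of the domains `u ⩔ T` and `y ⩔ T` (`CLAlg.dom_comm`).
-/

/-- The equational class axiomatised by EqCL. Terms modulo `DerEqCL` are its free object. -/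
class CLAlg (M : Type*) where
  tt : M
  ff : M
  neg : M → M
  and : M → M → M
  or : M → M → M
  neg_tt' : ff = neg tt
  or_def' (x y : M) : or x y = neg (and (neg x) (neg y))
  tt_and' (x : M) : and tt x = x
  abs' (x y : M) : and x (or x y) = x
  mem' (x y z : M) : and (or x y) z = or (and (neg x) (and y z)) (and x z)
  com' (x y : M) : or (and x y) (and y x) = or (and y x) (and x y)

namespace CLAlg

infixr:70 " ⩓ " => CLAlg.and
infixr:65 " ⩔ " => CLAlg.or
prefix:max "∼" => CLAlg.neg
notation "𝐓" => CLAlg.tt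
notation "𝐅" => CLAlg.ff

/-! ### Double negation and duality -/

section Basic
variable {M : Type*} [CLAlg M]

theorem or_def (x y : M) : x ⩔ y = ∼(∼x ⩓ ∼y) := or_def' x y
theorem tt_and (x : M) : 𝐓 ⩓ x = x := tt_and' x
theorem and_abs (x y : M) : x ⩓ (x ⩔ y) = x := abs' x y
theorem mem (x y z : M) : (x ⩔ y) ⩓ z = (∼x ⩓ y ⩓ z) ⩔ (x ⩓ z) := mem' x y z
theorem com (x y : M) : (x ⩓ y) ⩔ (y ⩓ x) = (y ⩓ x) ⩔ (x ⩓ y) := com' x y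
theorem neg_tt : ∼(𝐓 : M) = 𝐅 := neg_tt'.symm

theorem tt_or (y : M) : 𝐓 ⩔ y = 𝐓 := by rw [← tt_and (𝐓 ⩔ y), and_abs]

theorem neg_neg (y : M) : ∼∼y = y := by
  -- Every element is `𝐓 ⩓ y = (𝐓 ⩔ 𝐅) ⩓ y`, which (Mem) turns into a disjunction, that is, into
  -- a negation; so it is enough to treat negations.
  have hneg (y : M) : ∼∼∼y = ∼y := by
    have hF : ∼(𝐅 ⩓ ∼y) = 𝐓 := by rw [← neg_tt, ← or_def, tt_or]
    have h := mem 𝐓 𝐓 (∼y)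
    rw [tt_or, tt_and, neg_tt, or_def, hF, tt_and] at h
    exact h.symm
  have h := mem 𝐓 𝐅 y
  rw [tt_or, tt_and, or_def (_ ⩓ _)] at h
  rw [h, hneg]

theorem neg_and (x y : M) : ∼(x ⩓ y) = ∼x ⩔ ∼y := by rw [or_def, neg_neg, neg_neg]
theorem neg_or (x y : M) : ∼(x ⩔ y) = ∼x ⩓ ∼y := by rw [or_def, neg_neg]
theorem neg_ff : ∼(𝐅 : M) = 𝐓 := by rw [← neg_tt, neg_neg]
theorem ff_and (x : M) : 𝐅 ⩓ x = 𝐅 := by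
  rw [← neg_neg (𝐅 ⩓ x), neg_and, neg_ff, tt_or, neg_tt]
theorem ff_or (x : M) : 𝐅 ⩔ x = x := by rw [or_def, neg_ff, tt_and, neg_neg]

theorem or_abs (x y : M) : x ⩔ (x ⩓ y) = x := by
  rw [or_def, neg_and x y, and_abs, neg_neg]

end Basic

/-- The dual algebra, with `𝐓`, `𝐅` and `⩓`, `⩔` exchanged. Instantiating a lemma at it yields the
dual lemma. It is not an instance, as it would compete with the given structure. -/
abbrev dual (M : Type*) [CLAlg M] : CLAlg M where
  tt := 𝐅
  ff := 𝐓
  neg := CLAlg.neg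
  and := CLAlg.or
  or := CLAlg.and
  neg_tt' := neg_ff.symm
  or_def' x y := by rw [neg_or, neg_neg, neg_neg]
  tt_and' := ff_or
  abs' := or_abs
  mem' x y z := by
    have h := congrArg CLAlg.neg (mem (∼x) (∼y) (∼z))
    simpa only [neg_and, neg_or, neg_neg] using h
  com' x y := by
    have h := congrArg CLAlg.neg (com (∼x) (∼y))
    simpa only [neg_and, neg_or, neg_neg] using h

section Memorizing
variable {M : Type*} [CLAlg M]

theorem mem_d (x y z : M) : (x ⩓ y) ⩔ z = (∼x ⩔ y ⩔ z) ⩓ (x ⩔ z) := @mem M (dual M) x y z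

theorem and_self (x : M) : x ⩓ x = x := by
  have h := and_abs x (x ⩓ x)
  rwa [or_abs] at h
theorem or_self (x : M) : x ⩔ x = x := @and_self M (dual M) x

/-! ### Memorizing: a second evaluation of the same operand is redundant -/

theorem or_ff (x : M) : x ⩔ 𝐅 = x := by
  have h := mem 𝐅 𝐓 x
  rwa [ff_or, neg_ff, ff_and, tt_and, tt_and, eq_comm] at h
theorem and_tt (x : M) : x ⩓ 𝐓 = x := @or_ff M (dual M) x

theorem neg_and_or_self (x y : M) : (∼x ⩓ y) ⩔ x = x ⩔ y := by
  have h := mem x y 𝐓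
  rwa [and_tt, and_tt, and_tt, eq_comm] at h
theorem neg_or_and_self (x y : M) : (∼x ⩔ y) ⩓ x = x ⩓ y := @neg_and_or_self M (dual M) x y

theorem neg_or_self (x : M) : ∼x ⩔ x = x ⩔ 𝐓 := by
  have h := neg_and_or_self x 𝐓
  rwa [and_tt] at h
theorem or_neg_self (x : M) : x ⩔ ∼x = x ⩔ 𝐓 := by
  rw [← neg_and_or_self x (∼x), and_self, neg_or_self]
theorem neg_or_tt (x : M) : ∼x ⩔ 𝐓 = x ⩔ 𝐓 := by
  rw [← or_neg_self (∼x), neg_neg, neg_or_self]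
theorem neg_and_self (x : M) : ∼x ⩓ x = x ⩓ 𝐅 := @neg_or_self M (dual M) x
theorem and_neg_self (x : M) : x ⩓ ∼x = x ⩓ 𝐅 := @or_neg_self M (dual M) x
theorem neg_and_ff (x : M) : ∼x ⩓ 𝐅 = x ⩓ 𝐅 := @neg_or_tt M (dual M) x

theorem or_and_or (x y z : M) : (x ⩔ y) ⩓ (x ⩔ z) = x ⩔ (y ⩓ (x ⩔ z)) := by
  rw [mem, and_abs, neg_and_or_self]
theorem and_or_and (x y z : M) : (x ⩓ y) ⩔ (x ⩓ z) = x ⩓ (y ⩔ (x ⩓ z)) :=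
  @or_and_or M (dual M) x y z

/-- `x ⩔ 𝐓` is the domain of `x`; it is absorbed by whatever starts by evaluating `x`. -/
theorem dom_and_or (x y : M) : (x ⩔ 𝐓) ⩓ (x ⩔ y) = x ⩔ y := by
  have h := mem_d x 𝐓 y
  rwa [and_tt, tt_or, neg_or_tt, eq_comm] at h
theorem or_or_self_left (x y : M) : x ⩔ x ⩔ y = x ⩔ y := by
  have h := or_and_or x 𝐓 y
  rwa [dom_and_or, tt_and, eq_comm] at h
theorem and_and_self_left (x y : M) : x ⩓ x ⩓ y = x ⩓ y := @or_or_self_left M (dual M) x y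
theorem dom_and_and (x y : M) : (x ⩔ 𝐓) ⩓ x ⩓ y = x ⩓ y := by
  rw [mem, tt_and, and_and_self_left, ← mem, or_self]

theorem and_neg_or (x y : M) : x ⩓ (∼x ⩔ y) = x ⩓ y := by
  rw [← neg_or_and_self x (∼x ⩔ y), or_or_self_left, neg_or_and_self]
theorem or_neg_and (x y : M) : x ⩔ (∼x ⩓ y) = x ⩔ y := @and_neg_or M (dual M) x y
theorem neg_and_or (x y : M) : ∼x ⩓ (x ⩔ y) = ∼x ⩓ y := by
  simpa only [neg_neg] using and_neg_or (∼x) y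
theorem neg_or_and (x y : M) : ∼x ⩔ (x ⩓ y) = ∼x ⩔ y := @neg_and_or M (dual M) x y
theorem and_neg_and (x y : M) : x ⩓ ∼x ⩓ y = x ⩓ 𝐅 := by
  rw [← and_neg_or, or_abs, and_neg_self]

/-- `x ⩓ 𝐅` never evaluates to true, so what follows it is not evaluated. -/
theorem and_ff_and (x y : M) : (x ⩓ 𝐅) ⩓ y = x ⩓ 𝐅 := by
  have hFF : (x ⩓ 𝐅) ⩓ 𝐅 = x ⩓ 𝐅 := by
    rw [← neg_and_ff (x ⩓ 𝐅), neg_and, neg_ff, neg_or_tt, mem, tt_and, neg_and_ff, or_self]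
  have h := mem (x ⩓ 𝐅) 𝐅 y
  rwa [or_ff, ff_and, neg_and_ff, hFF, or_abs] at h

theorem and_ff_or_and (x y : M) : (x ⩓ 𝐅) ⩔ (x ⩓ y) = x ⩓ y := by
  have h := mem x 𝐅 y
  rwa [or_ff, ff_and, neg_and_ff, eq_comm] at h
theorem and_or_and_ff (x y : M) : (x ⩓ y) ⩔ (x ⩓ 𝐅) = x ⩓ y := by
  have h := mem (x ⩓ 𝐅) x y
  rwa [neg_and, neg_ff, neg_or_tt, dom_and_and, and_ff_and, ← neg_and_ff, neg_and_or_self, or_ff,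
    neg_and_ff, eq_comm] at h

theorem and_and_self_right (x y : M) : x ⩓ y ⩓ x = x ⩓ y := by
  have h := mem (∼x) y x
  rwa [neg_or_and_self, neg_neg, neg_and_self, and_or_and_ff, eq_comm] at h

/-! ### Conditional on the value of `x`, distributivity and associativity -/

theorem and_or_and_assoc (x y z : M) : x ⩓ (x ⩔ y) ⩓ z = x ⩓ z := by
  rw [mem, ← and_or_and, and_neg_and, and_ff_or_and]
theorem or_and_or_assoc (x y z : M) : x ⩔ (x ⩓ y) ⩔ z = x ⩔ z :=
  @and_or_and_assoc M (dual M) x y z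

theorem and_and_or_self (x y z : M) : x ⩓ y ⩓ (x ⩔ z) = x ⩓ y := by
  rw [← and_or_and_assoc x z (y ⩓ (x ⩔ z)), and_and_self_right, and_or_and_assoc]

/-- The two normal forms of `y ◁ x ▷ z`: disjunction of guarded conjunctions, and dually. -/
theorem neg_or_and_or (x y z : M) : (∼x ⩔ y) ⩓ (x ⩔ z) = (x ⩓ y) ⩔ (∼x ⩓ z) := by
  rw [mem, neg_neg, and_and_or_self, neg_and_or]

theorem and_or_or (x y z : M) : x ⩓ ((x ⩔ y) ⩔ z) = x := by
  rw [← and_or_and_assoc x y ((x ⩔ y) ⩔ z), and_abs, and_abs]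
theorem or_and_and (x y z : M) : x ⩔ ((x ⩓ y) ⩓ z) = x := @and_or_or M (dual M) x y z

/-! Under the assumption that `x` is true, `x` may be dropped from a guard. -/

theorem and_and_or_simp (x y z : M) : x ⩓ ((x ⩓ y) ⩔ z) = x ⩓ (y ⩔ z) := by
  rw [mem_d, and_and_or_self, and_neg_or]
theorem or_or_and_simp (x y z : M) : x ⩔ ((x ⩔ y) ⩓ z) = x ⩔ (y ⩓ z) :=
  @and_and_or_simp M (dual M) x y z
theorem and_neg_or_and_simp (x y z : M) : x ⩓ (∼x ⩔ y) ⩓ z = x ⩓ y ⩓ z := by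
  rw [← and_neg_or x ((∼x ⩔ y) ⩓ z), or_or_and_simp, and_neg_or]
theorem and_and_and_simp (x y z : M) : x ⩓ (x ⩓ y) ⩓ z = x ⩓ y ⩓ z := by
  rw [← and_neg_or_and_simp x (x ⩓ y), neg_or_and, and_neg_or_and_simp]

theorem and_and_ff (x y : M) : (x ⩓ y) ⩓ 𝐅 = x ⩓ y ⩓ 𝐅 := by
  rw [← neg_and_ff, neg_and, mem, neg_neg, neg_and_ff, neg_and_ff, and_or_and_ff]

theorem and_assoc (x y z : M) : (x ⩓ y) ⩓ z = x ⩓ y ⩓ z := by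
  -- `(x ⩓ y) ⩓ z` factors through `x`, and under `x` the guard `x ⩓ y` becomes `y`.
  have hfac : (x ⩓ y) ⩓ z = x ⩓ ((y ⩓ 𝐅) ⩔ (x ⩓ y) ⩓ z) := by
    have h := mem_d x (y ⩓ 𝐅) ((x ⩓ y) ⩓ z)
    rwa [or_and_and, neg_or_and_self, ← and_and_ff, and_ff_or_and] at h
  rw [← and_and_and_simp, hfac, and_and_self_left]
theorem or_assoc (x y z : M) : (x ⩔ y) ⩔ z = x ⩔ y ⩔ z := @and_assoc M (dual M) x y z

theorem and_and_and_self (x y z : M) : x ⩓ y ⩓ x ⩓ z = x ⩓ y ⩓ z := by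
  rw [← and_assoc y, ← and_assoc x, and_and_self_right, and_assoc]
theorem or_or_or_self (x y z : M) : x ⩔ y ⩔ x ⩔ z = x ⩔ y ⩔ z :=
  @and_and_and_self M (dual M) x y z
theorem and_and_neg_and (x y z : M) : x ⩓ y ⩓ ∼x ⩓ z = x ⩓ y ⩓ 𝐅 := by
  rw [← and_and_and_self, and_neg_and, and_and_and_self]

theorem and_or_distrib (x y z : M) : x ⩓ (y ⩔ z) = (x ⩓ y) ⩔ (x ⩓ z) := by
  have h : ∼x ⩔ y ⩔ (x ⩓ z) = ∼x ⩔ y ⩔ z := by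
    rw [← or_or_or_self, neg_or_and, or_or_or_self]
  rw [and_or_and, ← and_neg_or x (y ⩔ (x ⩓ z)), h, and_neg_or]

end Memorizing

/-! ### The conditional -/

section Cond
variable {M : Type*} [CLAlg M]

/-- The conditional `x ◁ y ▷ z` (if `y` then `x` else `z`). -/
def cond (x y z : M) : M := (y ⩓ x) ⩔ (∼y ⩓ z)

theorem and_cond (x y z : M) : y ⩓ cond x y z = y ⩓ x := by
  rw [cond, and_or_distrib, and_and_self_left, and_neg_and, and_or_and_ff]

theorem neg_and_cond (x y z : M) : ∼y ⩓ cond x y z = ∼y ⩓ z := by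
  have h := and_neg_and (∼y) x
  rw [neg_neg, neg_and_ff] at h
  rw [cond, and_or_distrib, and_and_self_left, h, ← neg_and_ff, and_ff_or_and]

theorem dom_and_cond (x y z : M) : (y ⩔ 𝐓) ⩓ cond x y z = cond x y z := by
  rw [cond, ← neg_or_and_or, ← and_assoc, ← neg_or_tt, dom_and_or]

/-- The branches of a conditional may be exchanged. -/
theorem cond_swap (x y z : M) : cond x y z = (∼y ⩓ z) ⩔ (y ⩓ x) := by
  rw [← dom_and_cond, mem, tt_and, and_cond, neg_and_cond]

theorem dom_and (y w : M) : (y ⩔ 𝐓) ⩓ w = cond w y w := by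
  rw [cond_swap, mem, tt_and]

/-- An element that starts by evaluating `y` is determined by its restrictions to `y` and to `∼y`. -/
theorem eq_cond {x y z w : M} (hd : (y ⩔ 𝐓) ⩓ w = w) (ht : y ⩓ w = y ⩓ x)
    (hf : ∼y ⩓ w = ∼y ⩓ z) : w = cond x y z := by
  rw [← hd, dom_and, cond, ht, hf, cond]

theorem cond_ext {x y z x' z' : M} (ht : y ⩓ x = y ⩓ x')
    (hf : ∼y ⩓ z = ∼y ⩓ z') : cond x y z = cond x' y z' := by rw [cond, ht, hf, cond]

theorem neg_cond (x y z : M) : ∼(cond x y z) = cond (∼x) y (∼z) := by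
  rw [cond, neg_or, neg_and, neg_and, neg_neg, neg_or_and_or, cond]

theorem cond_and (x y z w : M) : cond x y z ⩓ w = cond (x ⩓ w) y (z ⩓ w) := by
  apply eq_cond
  · rw [← and_assoc, dom_and_cond]
  · rw [← and_assoc, and_cond, and_assoc]
  · rw [← and_assoc, neg_and_cond, and_assoc]

theorem cond_or (x y z w : M) : cond x y z ⩔ w = cond (x ⩔ w) y (z ⩔ w) := by
  rw [← neg_neg (cond x y z ⩔ w), neg_or, neg_cond, cond_and, neg_cond]
  simp only [neg_and, neg_neg]

theorem and_and_cond (x y z w : M) : y ⩓ w ⩓ cond x y z = y ⩓ w ⩓ x := by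
  rw [← and_and_and_self, and_cond, and_and_and_self]
theorem neg_and_and_cond (x y z w : M) : ∼y ⩓ w ⩓ cond x y z = ∼y ⩓ w ⩓ z := by
  rw [← and_and_and_self, neg_and_cond, and_and_and_self]

theorem cond_tt (x z : M) : cond x 𝐓 z = x := by rw [cond, tt_and, neg_tt, ff_and, or_ff]
theorem cond_ff (x z : M) : cond x 𝐅 z = z := by rw [cond, ff_and, neg_ff, tt_and, ff_or]
theorem tt_cond (y z : M) : cond 𝐓 y z = y ⩔ z := by rw [cond, and_tt, or_neg_and]
theorem cond_right_ff (x y : M) : cond x y 𝐅 = y ⩓ x := by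
  rw [cond, neg_and_ff, and_or_and_ff]
theorem ff_cond_tt (y : M) : cond 𝐅 y 𝐓 = ∼y := by
  have h := and_ff_or_and (∼y) 𝐓
  rw [neg_and_ff] at h
  rw [cond, h, and_tt]

theorem cond_cond (x y z u v : M) :
    cond x (cond y z u) v = cond (cond x y v) z (cond x u v) := by
  apply eq_cond
  · rw [cond, and_or_distrib, ← and_assoc, ← and_assoc, dom_and_cond, neg_cond, dom_and_cond]
  · rw [cond, and_or_distrib, ← and_assoc, ← and_assoc, neg_cond, and_cond, and_cond, cond,
      and_or_distrib, and_assoc, and_assoc]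
  · rw [cond, and_or_distrib, ← and_assoc, ← and_assoc, neg_cond, neg_and_cond, neg_and_cond, cond,
      and_or_distrib, and_assoc, and_assoc]

theorem cond_mem (x y z u v w : M) :
    cond x y (cond z u (cond v y w)) = cond x y (cond z u w) := by
  apply cond_ext rfl
  rw [cond, and_or_distrib, neg_and_and_cond, ← and_or_distrib, ← cond]

/-- (Com) for `u ⩔ 𝐓` and `y ⩔ 𝐓`, which cannot be false, so that both disjunctions collapse. -/
theorem dom_comm (u y : M) : (u ⩔ 𝐓) ⩓ (y ⩔ 𝐓) = (y ⩔ 𝐓) ⩓ (u ⩔ 𝐓) := by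
  have hdom (u y w : M) : ((u ⩔ 𝐓) ⩓ (y ⩔ 𝐓)) ⩔ w = (u ⩔ 𝐓) ⩓ (y ⩔ 𝐓) := by
    rw [dom_and, cond_or, or_assoc, tt_or]
  have h := com (u ⩔ 𝐓) (y ⩔ 𝐓)
  rwa [hdom, hdom] at h

/-- Both sides are determined by their restrictions to the four combinations of values of `u`, `y`,
since their common domain does not depend on the order of evaluation. -/
theorem cond_exchange (x y z u v w : M) :
    cond (cond x y z) u (cond v y w) = cond (cond x u v) y (cond z u w) := by
  have hL : (u ⩔ 𝐓) ⩓ (y ⩔ 𝐓) ⩓ cond (cond x y z) u (cond v y w) =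
      cond (cond x y z) u (cond v y w) := by
    rw [dom_and u]
    apply (eq_cond (dom_and_cond _ _ _) _ _).symm
    · rw [and_cond, and_and_cond, dom_and_cond]
    · rw [neg_and_cond, neg_and_and_cond, dom_and_cond]
  have hR : (u ⩔ 𝐓) ⩓ (y ⩔ 𝐓) ⩓ cond (cond x u v) y (cond z u w) =
      cond (cond x u v) y (cond z u w) := by
    rw [← and_assoc, dom_comm, and_assoc, dom_and y]
    apply (eq_cond (dom_and_cond _ _ _) _ _).symm
    · rw [and_cond, and_and_cond, dom_and_cond]
    · rw [neg_and_cond, neg_and_and_cond, dom_and_cond]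
  rw [← hR, dom_and u, dom_and y]
  apply cond_ext
  · rw [cond, cond, and_or_distrib, and_or_distrib, and_cond, neg_and_cond, and_and_cond,
      and_and_cond]
  · rw [cond, cond, and_or_distrib, and_or_distrib, and_cond, neg_and_cond, neg_and_and_cond,
      neg_and_and_cond]

end Cond

end CLAlg

/-! ### Conditional algebras are algebras of EqCL -/

/-- The equational class axiomatised by CP_cl; `c x y z` is `x ◁ y ▷ z`. -/
class CPAlg (M : Type*) where
  T : M
  F : M
  c : M → M → M → M
  cp1 (x y : M) : c x T y = x
  cp2 (x y : M) : c x F y = y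
  cp3 (x : M) : c T x F = x
  cp4 (x y z u v : M) : c x (c y z u) v = c (c x y v) z (c x u v)
  cpmem (x y z u v w : M) : c x y (c z u (c v y w)) = c x y (c z u w)
  cl2 (x y z u v w : M) : c (c x y z) u (c v y w) = c (c x u v) y (c z u w)

namespace CPAlg
variable {M : Type*} [CPAlg M]

/-- Negating a guard exchanges the branches. -/
theorem c_neg (x y z : M) : c x (c F y T) z = c z y x := by rw [cp4, cp2, cp1]

theorem mem_right (x y v w : M) : c x y (c v y w) = c x y w := by
  have h := cpmem x y T F v w
  rwa [cp2, cp2] at h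

theorem mem_left (v y w x : M) : c (c v y w) y x = c v y x := by
  rw [← c_neg x y, ← c_neg w y v, mem_right, c_neg]

theorem mem_right_left (x y v w u z : M) : c x y (c (c v y w) u z) = c x y (c w u z) := by
  rw [← c_neg z u, cpmem, c_neg]

/-- With `com_right`: `(x ⩓ y) ⩔ (y ⩓ x)` and `(y ⩓ x) ⩔ (x ⩓ y)` have a common normal form. -/
theorem com_left (x y : M) : c T (c y x F) (c x y F) = c x y (c F x F) := by
  have h₁ : c T y (c x y F) = c T y F := mem_right T y x F
  have h₂ : c T x x = x := by
    have h := mem_right T x T F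
    rwa [cp3] at h
  have h₃ := cl2 T y F x x F
  rw [cp3, h₂] at h₃
  rw [cp4, cp2, h₁, cp3, h₃]

theorem com_right (x y : M) : c T (c x y F) (c y x F) = c x y (c F x F) := by
  have h₁ : c T x (c y x F) = x := by rw [mem_right, cp3]
  have h₂ : c x y (c y x F) = c x y (c F x F) := by
    have h := mem_right_left x y T F x F
    rwa [cp3] at h
  rw [cp4, cp2, h₁, h₂]

/-- The short-circuit operations defined from the conditional. -/
instance : CLAlg M where
  tt := T
  ff := F
  neg x := c F x T
  and x y := c y x F
  or x y := c T x y
  neg_tt' := (cp1 F T).symm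
  or_def' x y := by rw [cp4, c_neg, c_neg, cp2, cp3]
  tt_and' x := cp1 x F
  abs' x y := by rw [mem_left, cp3]
  mem' x y z := by rw [c_neg, cp4, cp1, cp4, cp2, mem_left, cpmem, cp3]
  com' x y := by rw [com_left, com_right]

end CPAlg

/-! ### Soundness of both calculi in the algebras -/

/-- The value of a term under a valuation of the atoms. -/
def STerm.eval {A : Type} {M : Type*} [CLAlg M] (v : A → M) : STerm A → M
  | .T => 𝐓
  | .F => 𝐅
  | .atom a => v a
  | .neg t => ∼(eval v t)
  | .and s t => eval v s ⩓ eval v t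
  | .or s t => eval v s ⩔ eval v t

/-- The value of a conditional expression, the conditional being `CLAlg.cond`. -/
def Expr.eval {A : Type} {M : Type*} [CLAlg M] (v : A → M) : Expr A → M
  | .T => 𝐓
  | .F => 𝐅
  | .atom a => v a
  | .cond P Q R => CLAlg.cond (eval v P) (eval v Q) (eval v R)

theorem DerEqCL.sound {A : Type} {M : Type*} [CLAlg M] (v : A → M) {s t : STerm A}
    (h : DerEqCL s t) : s.eval v = t.eval v := by
  induction h with
  | refl => rfl
  | symm _ ih => exact ih.symm
  | trans _ _ ih₁ ih₂ => exact ih₁.trans ih₂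
  | negCongr _ ih => simp only [STerm.eval, ih]
  | andCongr _ _ ih₁ ih₂ => simp only [STerm.eval, ih₁, ih₂]
  | orCongr _ _ ih₁ ih₂ => simp only [STerm.eval, ih₁, ih₂]
  | negAx => exact CLAlg.neg_tt.symm
  | orAx => exact CLAlg.or_def _ _
  | tand => exact CLAlg.tt_and _
  | abs => exact CLAlg.and_abs _ _
  | mem => exact CLAlg.mem _ _ _
  | com => exact CLAlg.com _ _

theorem DerCl.sound {A : Type} {M : Type*} [CLAlg M] (v : A → M) {P Q : Expr A}
    (h : DerCl P Q) : P.eval v = Q.eval v := by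
  induction h with
  | refl => rfl
  | symm _ ih => exact ih.symm
  | trans _ _ ih₁ ih₂ => exact ih₁.trans ih₂
  | congr _ _ _ ih₁ ih₂ ih₃ => simp only [Expr.eval, ih₁, ih₂, ih₃]
  | cp1 => exact CLAlg.cond_tt _ _
  | cp2 => exact CLAlg.cond_ff _ _
  | cp3 => exact (CLAlg.cond_right_ff _ _).trans (CLAlg.and_tt _)
  | cp4 => exact CLAlg.cond_cond _ _ _ _ _
  | cpmem => exact CLAlg.cond_mem _ _ _ _ _ _
  | cl2 => exact CLAlg.cond_exchange _ _ _ _ _ _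

theorem eval_sclToCond {A : Type} {M : Type*} [CLAlg M] (v : A → M) (t : STerm A) :
    (sclToCond t).eval v = t.eval v := by
  induction t with
  | T | F | atom => rfl
  | neg t ih => simp only [sclToCond, Expr.eval, STerm.eval, ih, CLAlg.ff_cond_tt]
  | and s t ihs iht => simp only [sclToCond, Expr.eval, STerm.eval, ihs, iht, CLAlg.cond_right_ff]
  | or s t ihs iht => simp only [sclToCond, Expr.eval, STerm.eval, ihs, iht, CLAlg.tt_cond]

/-! ### The free algebras -/

/-- Provable equality in EqCL. -/
def STerm.setoid (A : Type) : Setoid (STerm A) := ⟨DerEqCL, .refl, .symm, .trans⟩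

/-- Provable equality in CP_cl. -/
def Expr.setoid (A : Type) : Setoid (Expr A) := ⟨DerCl, .refl, .symm, .trans⟩

/-- Terms modulo EqCL. -/
abbrev FreeCL (A : Type) : Type := Quotient (STerm.setoid A)

/-- Conditional expressions modulo CP_cl. -/
abbrev FreeCP (A : Type) : Type := Quotient (Expr.setoid A)

instance (A : Type) : CLAlg (FreeCL A) where
  tt := ⟦.T⟧
  ff := ⟦.F⟧
  neg := Quotient.map .neg fun _ _ => .negCongr
  and := Quotient.map₂ .and fun _ _ h _ _ => .andCongr h
  or := Quotient.map₂ .or fun _ _ h _ _ => .orCongr h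
  neg_tt' := Quotient.sound .negAx
  or_def' := by rintro ⟨x⟩ ⟨y⟩; exact Quotient.sound (.orAx x y)
  tt_and' := by rintro ⟨x⟩; exact Quotient.sound (.tand x)
  abs' := by rintro ⟨x⟩ ⟨y⟩; exact Quotient.sound (.abs x y)
  mem' := by rintro ⟨x⟩ ⟨y⟩ ⟨z⟩; exact Quotient.sound (.mem x y z)
  com' := by rintro ⟨x⟩ ⟨y⟩; exact Quotient.sound (.com x y)

instance (A : Type) : CPAlg (FreeCP A) where
  T := ⟦.T⟧
  F := ⟦.F⟧
  c x y z := Quotient.liftOn x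
    (fun p => Quotient.map₂ (fun q r => Expr.cond p q r) (fun _ _ h _ _ => .congr (.refl p) h) y z)
    (by
      intro p p' h
      induction y, z using Quotient.inductionOn₂ with
      | _ q r => exact Quotient.sound (.congr h (.refl q) (.refl r)))
  cp1 := by rintro ⟨x⟩ ⟨y⟩; exact Quotient.sound (.cp1 x y)
  cp2 := by rintro ⟨x⟩ ⟨y⟩; exact Quotient.sound (.cp2 x y)
  cp3 := by rintro ⟨x⟩; exact Quotient.sound (.cp3 x)
  cp4 := by rintro ⟨x⟩ ⟨y⟩ ⟨z⟩ ⟨u⟩ ⟨v⟩; exact Quotient.sound (.cp4 x y z u v)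
  cpmem := by rintro ⟨x⟩ ⟨y⟩ ⟨z⟩ ⟨u⟩ ⟨v⟩ ⟨w⟩; exact Quotient.sound (.cpmem x y z u v w)
  cl2 := by rintro ⟨x⟩ ⟨y⟩ ⟨z⟩ ⟨u⟩ ⟨v⟩ ⟨w⟩; exact Quotient.sound (.cl2 x y z u v w)

theorem eval_freeCL {A : Type} (t : STerm A) :
    t.eval (fun a => (⟦.atom a⟧ : FreeCL A)) = ⟦t⟧ := by
  induction t with
  | T | F | atom => rfl
  | neg t ih => rw [STerm.eval, ih]; rfl
  | and s t ihs iht => rw [STerm.eval, ihs, iht]; rfl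
  | or s t ihs iht => rw [STerm.eval, ihs, iht]; rfl

theorem eval_freeCP {A : Type} (t : STerm A) :
    t.eval (fun a => (⟦.atom a⟧ : FreeCP A)) = ⟦sclToCond t⟧ := by
  induction t with
  | T | F | atom => rfl
  | neg t ih => rw [STerm.eval, ih]; rfl
  | and s t ihs iht => rw [STerm.eval, ihs, iht]; rfl
  | or s t ihs iht => rw [STerm.eval, ihs, iht]; rfl

/-- For all SCL terms s and t over A:
EqCL ⊢ s = t iff CP_cl ⊢ f(s) = f(t). -/
theorem stmt_11 {A : Type} (s t : STerm A) :
    DerEqCL s t ↔ DerCl (sclToCond s) (sclToCond t) := by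
  constructor
  · intro h
    have := h.sound fun a => (⟦.atom a⟧ : FreeCP A)
    rw [eval_freeCP, eval_freeCP] at this
    exact Quotient.exact this
  · intro h
    have := h.sound fun a => (⟦.atom a⟧ : FreeCL A)
    rw [eval_sclToCond, eval_sclToCond, eval_freeCL, eval_freeCL] at this
    exact Quotient.exact this
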